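/- arXiv:2011.11502 — 2 statements merged into one kernel-verified Lean document; each statement's English description precedes it below -/
import Mathlib

section
/- Caputo fractional derivative of the cosine function: for real α with 0 < α < 1, real c, real a, and every x > a, (1/Γ(1-α)) ∫_a^x (x-t)^{-α} ( -c sin(c(t-a)) ) dt = -c² (x-a)^{2-α} E_{2,3-α}( -c² (x-a)² ). -/
/-!
After the substitution `s = t - a`, `L = x - a`, the sine is expanded in its power series and
integrated term by term against the weakly singular kernel `(L - s) ^ (-α)`. Each term is an
Euler Beta integral (`integral_kernel_mul_pow`),
`∫₀ᴸ (L - s)^(-α) s^n ds = L^(n+1-α) Γ(1-α) n! / Γ(n+2-α)`,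
and for `n = 2k+1` the factorial cancels the one in the sine series, which leaves the `k`-th term
of the Mittag-Leffler series. Exchanging sum and integral is dominated convergence: the absolute
values of the terms sum to `(L - s)^(-α) |c| sinh (|c| s)`, which is integrable because `α < 1`
(`hasSum_integral_kernel_sin`).
-/

open MeasureTheory Real

/-- The two-parameter Mittag-Leffler function `E_{α,β}(t) = Σ_k t^k / Γ(αk+β)`. -/
noncomputable def mittagLeffler (α β t : ℝ) : ℝ :=
  ∑' k : ℕ, t ^ k / Real.Gamma (α * k + β)

/-- Mathlib's complex Beta integral, specialised to the real kernel `(L - s) ^ (-α)` and a natural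
power of `s`. -/
lemma integral_kernel_mul_pow {α L : ℝ} (hα1 : α < 1) (hL : 0 < L) (n : ℕ) :
    ∫ s in (0 : ℝ)..L, (L - s) ^ (-α) * s ^ n
      = L ^ ((n : ℝ) + 1 - α) * (Gamma (1 - α) * n.factorial / Gamma ((n : ℝ) + 2 - α)) := by
  have h := Complex.betaIntegral_scaled ((n : ℂ) + 1) ((1 - α : ℝ) : ℂ) hL
  rw [Complex.betaIntegral_eq_Gamma_mul_div _ _ (by simp; positivity)
    (by rw [Complex.ofReal_re]; linarith), Complex.Gamma_nat_eq_factorial] at h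
  apply Complex.ofReal_injective
  rw [← intervalIntegral.integral_ofReal]
  calc ∫ s in (0 : ℝ)..L, (((L - s) ^ (-α) * s ^ n : ℝ) : ℂ)
      = ∫ s in (0 : ℝ)..L, (s : ℂ) ^ ((n : ℂ) + 1 - 1)
          * ((L : ℂ) - s) ^ (((1 - α : ℝ) : ℂ) - 1) := by
        refine intervalIntegral.integral_congr fun s hs => ?_
        rw [Set.uIcc_of_le hL.le] at hs
        have e : (((1 - α : ℝ) : ℂ) - 1) = ((-α : ℝ) : ℂ) := by push_cast; ring
        simp only [e, add_sub_cancel_right, Complex.cpow_natCast]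
        rw [← Complex.ofReal_sub, ← Complex.ofReal_cpow (sub_nonneg.2 hs.2)]
        push_cast; ring
    _ = _ := by
        rw [h]
        have e1 : (n : ℂ) + 1 + ((1 - α : ℝ) : ℂ) - 1 = (((n : ℝ) + 1 - α : ℝ) : ℂ) := by
          push_cast; ring
        have e2 : (n : ℂ) + 1 + ((1 - α : ℝ) : ℂ) = (((n : ℝ) + 2 - α : ℝ) : ℂ) := by
          push_cast; ring
        rw [e1, e2, ← Complex.ofReal_cpow hL.le, Complex.Gamma_ofReal, Complex.Gamma_ofReal]
        push_cast; ring

lemma hasSum_integral_kernel_sin {α L : ℝ} (c : ℝ) (hα1 : α < 1) (hL : 0 < L) :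
    HasSum (fun k : ℕ => ∫ s in (0 : ℝ)..L,
        (L - s) ^ (-α) * (-c * ((-1) ^ k * (c * s) ^ (2 * k + 1) / (2 * k + 1).factorial)))
      (∫ s in (0 : ℝ)..L, (L - s) ^ (-α) * (-c * sin (c * s))) := by
  have hker : IntervalIntegrable (fun s : ℝ => (L - s) ^ (-α)) volume 0 L := by
    have h := (intervalIntegral.intervalIntegrable_rpow' (a := 0) (b := L)
      (by linarith : -1 < -α)).comp_sub_left L
    simpa using h.symm
  have hbound : ∀ s : ℝ, HasSum
      (fun k : ℕ => (L - s) ^ (-α) * (|c| * ((|c| * s) ^ (2 * k + 1) / (2 * k + 1).factorial)))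
      ((L - s) ^ (-α) * (|c| * sinh (|c| * s))) :=
    fun s => ((hasSum_sinh (|c| * s)).mul_left _).mul_left _
  refine intervalIntegral.hasSum_integral_of_dominated_convergence
    (fun k s => (L - s) ^ (-α) * (|c| * ((|c| * s) ^ (2 * k + 1) / (2 * k + 1).factorial)))
    (fun k => ?_) (fun k => ?_) ?_ ?_ ?_
  · exact Measurable.aestronglyMeasurable (by fun_prop)
  · refine Filter.Eventually.of_forall fun s hs => le_of_eq ?_
    rw [Set.uIoc_of_le hL.le] at hs
    have h1 : |(L - s) ^ (-α)| = (L - s) ^ (-α) :=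
      abs_of_nonneg (rpow_nonneg (sub_nonneg.2 hs.2) _)
    simp [h1, abs_of_pos hs.1]
  · exact Filter.Eventually.of_forall fun s _ => (hbound s).summable
  · simp only [fun s => (hbound s).tsum_eq]
    exact hker.mul_continuousOn (by fun_prop)
  · exact Filter.Eventually.of_forall fun s _ => ((hasSum_sin (c * s)).mul_left _).mul_left _

/-- Caputo fractional derivative of the cosine function: for `0 < α < 1` and
`x > a`, `(1/Γ(1-α)) ∫_a^x (x-t)^{-α} ( -c sin(c(t-a)) ) dt
  = -c² (x-a)^{2-α} E_{2,3-α}( -c² (x-a)² )`. -/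
theorem caputo_deriv_cos
    (α c a : ℝ) (hα0 : 0 < α) (hα1 : α < 1) (x : ℝ) (hx : a < x) :
    (1 / Real.Gamma (1 - α)) *
        ∫ t in a..x, (x - t) ^ (-α) * (-c * Real.sin (c * (t - a)))
      = -c ^ 2 * (x - a) ^ (2 - α) * mittagLeffler 2 (3 - α) (-c ^ 2 * (x - a) ^ 2) := by
  have hL : 0 < x - a := sub_pos.2 hx
  have hΓ : Gamma (1 - α) ≠ 0 := (Gamma_pos_of_pos (by linarith)).ne'
  have hshift : ∫ t in a..x, (x - t) ^ (-α) * (-c * sin (c * (t - a)))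
      = ∫ s in (0 : ℝ)..(x - a), ((x - a) - s) ^ (-α) * (-c * sin (c * s)) := by
    have h := intervalIntegral.integral_comp_sub_right (a := a) (b := x)
      (fun s => ((x - a) - s) ^ (-α) * (-c * sin (c * s))) a
    simpa using h
  rw [hshift]
  generalize x - a = L at hL
  rw [← (hasSum_integral_kernel_sin c hα1 hL).tsum_eq, mittagLeffler, ← tsum_mul_left,
    ← tsum_mul_left]
  refine tsum_congr fun k => ?_
  have hterm : ∀ s : ℝ,
      (L - s) ^ (-α) * (-c * ((-1) ^ k * (c * s) ^ (2 * k + 1) / (2 * k + 1).factorial))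
        = (-c * ((-1) ^ k * c ^ (2 * k + 1) / (2 * k + 1).factorial))
          * ((L - s) ^ (-α) * s ^ (2 * k + 1)) := fun s => by
    rw [mul_pow]; ring
  simp only [hterm]
  rw [intervalIntegral.integral_const_mul, integral_kernel_mul_pow hα1 hL]
  have e1 : ((2 * k + 1 : ℕ) : ℝ) + 1 - α = (2 - α) + ((2 * k : ℕ) : ℝ) := by push_cast; ring
  have e2 : ((2 * k + 1 : ℕ) : ℝ) + 2 - α = 2 * k + (3 - α) := by push_cast; ring
  have hf : ((2 * k + 1).factorial : ℝ) ≠ 0 := by positivity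
  have hΓk : Gamma (2 * k + (3 - α)) ≠ 0 := (Gamma_pos_of_pos (by
    have : (0 : ℝ) ≤ k := k.cast_nonneg
    linarith)).ne'
  have hpow : (-c ^ 2 * L ^ 2) ^ k = (-1) ^ k * c ^ (2 * k) * L ^ (2 * k) := by
    rw [pow_mul, pow_mul, ← mul_pow, ← mul_pow]; ring
  rw [e1, e2, rpow_add hL, rpow_natCast, hpow]
  field_simp
  ring
end

section
/- Solution of the fractional free-fall equation with air resistance: let 0 < α < 1, g > 0, b > 0, m > 0, v₀ be reals, and define v(t) = g t^α E_{α,α+1}( -(b/m) t^α ) + v₀ E_α( -(b/m) t^α ) for t > 0, with v(0) = v₀. Then v is differentiable on (0,∞) and satisfies the Caputo fractional differential equation m · (1/Γ(1-α)) ∫_0^t (t-u)^{-α} v'(u) du = m g − b v(t) for every t > 0. -/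
/-!
The solution is obtained in closed form from the relaxation function `y(t) = E_α(-c t^α)`,
`c = b / m`.  Shifting the index in the series gives
`x * E_{α,α+1}(x) = E_α(x) - 1`, hence `v = g / c + (v₀ - g / c) * y`, and the equation reduces to
the statement that the Caputo derivative of `y` is `-c * y`.

For the latter, the series `y(t) = ∑ (-c)^k t^(αk) / Γ(αk+1)` is differentiated term by term on
`(0, ∞)` (`hasDerivAt_relaxation`), and the resulting series is integrated term by term against
`(t - u)^(-α)`; each term is a Beta integral (`integral_beta`), and the sum is `-c * y(t)` times
`Γ(1-α)` (`integral_relaxation`).  All interchanges are justified by the absolute convergence of the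
Mittag-Leffler series (`summable_mittagLeffler`), which follows from `Γ` growing faster than every
exponential (`Gamma_ge_exponential`).
-/

open MeasureTheory Real

/-- Lower bound for `Γ` by an exponential of arbitrary base `M ≥ 1`, obtained by restricting the
Euler integral to `(M, M + 1]`. -/
lemma Gamma_ge_exponential {M s : ℝ} (hM : 1 ≤ M) (hs : 0 < s) :
    exp (-(M + 1)) / (M + 1) * M ^ s ≤ Gamma s := by
  have hsub : Set.Ioc M (M + 1) ⊆ Set.Ioi 0 := fun x hx => by
    simp only [Set.mem_Ioc, Set.mem_Ioi] at *; linarith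
  have hint := GammaIntegral_convergent hs
  rw [Gamma_eq_integral hs]
  calc exp (-(M + 1)) / (M + 1) * M ^ s
      = ∫ _x in Set.Ioc M (M + 1), exp (-(M + 1)) / (M + 1) * M ^ s := by simp
    _ ≤ ∫ x in Set.Ioc M (M + 1), exp (-x) * x ^ (s - 1) := by
        refine setIntegral_mono_on (integrableOn_const (by simp)) (hint.mono_set hsub) measurableSet_Ioc ?_
        intro x hx
        have hx0 : 0 < x := hsub hx
        rw [rpow_sub_one hx0.ne', div_mul_eq_mul_div, ← mul_div_assoc]
        gcongr
        · exact hx.2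
        · exact hx.1.le
        · exact hx.2
    _ ≤ ∫ x in Set.Ioi 0, exp (-x) * x ^ (s - 1) := by
        refine setIntegral_mono_set hint ?_ hsub.eventuallyLE
        refine (ae_restrict_iff' measurableSet_Ioi).2 (.of_forall fun x hx => ?_)
        have : (0 : ℝ) < x := hx
        simp only [Pi.zero_apply]
        positivity

lemma summable_mittagLeffler {α β : ℝ} (hα : 0 < α) (hβ : 0 < β) (x : ℝ) :
    Summable fun k : ℕ => x ^ k / Gamma (α * k + β) := by
  -- `M` is chosen so that `M ^ α = 2 * |x| + 1`, which dominates the ratio `|x|`.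
  set R : ℝ := 2 * |x| + 1 with hR
  have hx := abs_nonneg x
  have hR1 : 1 ≤ R := by linarith
  set M : ℝ := R ^ (1 / α) with hMdef
  have hM : 1 ≤ M := one_le_rpow hR1 (by positivity)
  have hMα : M ^ α = R := by
    rw [hMdef, ← rpow_mul (by linarith), one_div_mul_cancel hα.ne', rpow_one]
  set C : ℝ := exp (-(M + 1)) / (M + 1) * M ^ β with hC
  have hC0 : 0 < C := by positivity
  have hgeo : Summable fun k : ℕ => (|x| / R) ^ k / C := by
    refine (summable_geometric_of_lt_one (by positivity) ?_).div_const C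
    rw [div_lt_one (by linarith)]
    linarith
  refine hgeo.of_norm_bounded fun k => ?_
  have hpos : 0 < α * k + β := by positivity
  have hG := Gamma_ge_exponential hM hpos
  have hpow : M ^ (α * k + β) = R ^ k * M ^ β := by
    rw [rpow_add (by linarith), rpow_mul (by linarith), hMα, rpow_natCast]
  rw [norm_div, norm_pow, Real.norm_eq_abs, norm_of_nonneg (Gamma_pos_of_pos hpos).le, div_pow,
    div_div]
  have : R ^ k * C ≤ Gamma (α * k + β) := by
    refine le_trans (le_of_eq ?_) hG
    rw [hpow, hC]; ring
  gcongr

lemma integral_beta {p q t : ℝ} (hp : 0 < p) (hq : 0 < q) (ht : 0 < t) :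
    ∫ u in (0 : ℝ)..t, (t - u) ^ (q - 1) * u ^ (p - 1)
      = t ^ (p + q - 1) * (Gamma p * Gamma q / Gamma (p + q)) := by
  have h := Complex.betaIntegral_scaled (p : ℂ) (q : ℂ) ht
  rw [Complex.betaIntegral_eq_Gamma_mul_div _ _ (by simpa) (by simpa)] at h
  have hcast : ∫ x in (0 : ℝ)..t, (x : ℂ) ^ ((p : ℂ) - 1) * ((t : ℂ) - x) ^ ((q : ℂ) - 1)
      = ((∫ u in (0 : ℝ)..t, (t - u) ^ (q - 1) * u ^ (p - 1) : ℝ) : ℂ) := by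
    rw [← intervalIntegral.integral_ofReal]
    refine intervalIntegral.integral_congr fun u hu => ?_
    rw [Set.uIcc_of_le ht.le] at hu
    rw [Complex.ofReal_mul, Complex.ofReal_cpow (sub_nonneg.2 hu.2), Complex.ofReal_cpow hu.1]
    push_cast
    ring
  rw [hcast] at h
  have hr : (t : ℂ) ^ ((p : ℂ) + q - 1) *
        (Complex.Gamma p * Complex.Gamma q / Complex.Gamma (p + q))
      = ((t ^ (p + q - 1) * (Gamma p * Gamma q / Gamma (p + q)) : ℝ) : ℂ) := by
    push_cast
    rw [Complex.ofReal_cpow ht.le, ← Complex.Gamma_ofReal, ← Complex.Gamma_ofReal,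
      ← Complex.Gamma_ofReal]
    push_cast
    ring
  rw [hr] at h
  exact_mod_cast h

lemma intervalIntegrable_beta {p q t : ℝ} (hp : 0 < p) (hq : 0 < q) (ht : 0 < t) :
    IntervalIntegrable (fun u => (t - u) ^ (q - 1) * u ^ (p - 1)) volume 0 t := by
  -- The Bochner integral of a non-integrable function is `0`, but the Beta integral is positive.
  by_contra hni
  have h := integral_beta hp hq ht
  rw [intervalIntegral.integral_undef hni] at h
  have h1 := Gamma_pos_of_pos hp
  have h2 := Gamma_pos_of_pos hq
  have h3 := Gamma_pos_of_pos (add_pos hp hq)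
  have : 0 < t ^ (p + q - 1) * (Gamma p * Gamma q / Gamma (p + q)) := by positivity
  linarith

/-- Term-by-term differentiation of `E_α(-c t^α)`.  The `k = 0` term of the series, being constant,
is dropped, so the summation index is shifted by one. -/
lemma hasDerivAt_relaxation {α c t : ℝ} (hα : 0 < α) (ht : 0 < t) :
    HasDerivAt (fun t => mittagLeffler α 1 (-c * t ^ α))
      (∑' k : ℕ, (-c) ^ (k + 1) * (t ^ (α * (k + 1) - 1) / Gamma (α * (k + 1)))) t := by
  have hsum1 (x : ℝ) := summable_mittagLeffler hα one_pos x
  have hshift (s : ℝ) : mittagLeffler α 1 (-c * s ^ α)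
      = 1 + ∑' k : ℕ, (-c * s ^ α) ^ (k + 1) / Gamma (α * ((k + 1 : ℕ) : ℝ) + 1) := by
    rw [mittagLeffler, (hsum1 _).tsum_eq_zero_add]
    simp
  simp_rw [hshift]
  refine HasDerivAt.const_add 1 ?_
  have hterm (k : ℕ) (y : ℝ) (hy : y ∈ Set.Ioo (t / 2) (2 * t)) :
      HasDerivAt (fun s : ℝ => (-c * s ^ α) ^ (k + 1) / Gamma (α * ((k + 1 : ℕ) : ℝ) + 1))
        ((-c) ^ (k + 1) * (y ^ (α * (k + 1) - 1) / Gamma (α * (k + 1)))) y := by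
    have hy0 : 0 < y := by linarith [hy.1]
    have hp : 0 < α * ((k : ℝ) + 1) := by positivity
    have hd := ((hasDerivAt_rpow_const (p := α * ((k : ℝ) + 1)) (Or.inl hy0.ne')).const_mul
      ((-c) ^ (k + 1))).div_const (Gamma (α * ((k : ℝ) + 1) + 1))
    have hG := Gamma_pos_of_pos hp
    refine (hd.congr_of_eventuallyEq ?_).congr_deriv ?_
    · filter_upwards [lt_mem_nhds hy0] with s hs
      rw [mul_pow, rpow_mul hs.le]
      norm_cast
    · rw [Gamma_add_one hp.ne']
      field_simp
  refine hasDerivAt_tsum_of_isPreconnected (t := Set.Ioo (t / 2) (2 * t)) (y₀ := t)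
    (u := fun k : ℕ => |c| ^ (k + 1) * ((2 * t) ^ (α * ((k : ℝ) + 1)) / (t / 2)
      / Gamma (α * (k + 1)))) ?_ isOpen_Ioo isPreconnected_Ioo hterm ?_ ?_ ?_ ?_
  · have h := (summable_mittagLeffler hα hα (|c| * (2 * t) ^ α)).mul_left
      (|c| * (2 * t) ^ α / (t / 2))
    refine h.congr fun k => ?_
    have hp : (2 * t) ^ (α * ((k : ℝ) + 1)) = ((2 * t) ^ α) ^ (k + 1) := by
      rw [rpow_mul (by positivity)]
      norm_cast
    rw [hp, mul_add_one α (k : ℝ), mul_pow]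
    ring
  · intro k y hy
    have hy0 : 0 < y := by linarith [hy.1]
    have hp : 0 < α * ((k : ℝ) + 1) := by positivity
    have hG := Gamma_pos_of_pos hp
    rw [norm_mul, norm_pow, norm_neg, Real.norm_eq_abs c, norm_of_nonneg (by positivity),
      rpow_sub_one hy0.ne']
    have h1 := hy.1.le
    have h2 := hy.2.le
    gcongr
  · constructor <;> linarith
  · exact (summable_nat_add_iff 1).2 (hsum1 (-c * t ^ α))
  · constructor <;> linarith

/-- Up to the factor `1 / Γ(1-α)`, this says that the Caputo derivative of `E_α(-c t^α)` is
`-c * E_α(-c t^α)`. -/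
lemma integral_relaxation {α c t : ℝ} (hα : 0 < α) (hα1 : α < 1) (ht : 0 < t) :
    ∫ u in (0 : ℝ)..t, (t - u) ^ (-α) *
        ∑' k : ℕ, (-c) ^ (k + 1) * (u ^ (α * (k + 1) - 1) / Gamma (α * (k + 1)))
      = -c * Gamma (1 - α) * mittagLeffler α 1 (-c * t ^ α) := by
  have hq : 0 < 1 - α := by linarith
  have hp (k : ℕ) : 0 < α * ((k : ℝ) + 1) := by positivity
  have hΓ (k : ℕ) : 0 < Gamma (α * ((k : ℝ) + 1)) := Gamma_pos_of_pos (hp k)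
  set B : ℕ → ℝ → ℝ := fun k u => (t - u) ^ (1 - α - 1) * u ^ (α * ((k : ℝ) + 1) - 1) with hB
  set a : ℕ → ℝ := fun k => (-c) ^ (k + 1) / Gamma (α * ((k : ℝ) + 1)) with ha
  have hBint (k : ℕ) : Integrable (B k) (volume.restrict (Set.Ioc 0 t)) :=
    (intervalIntegrable_iff_integrableOn_Ioc_of_le ht.le).1 (intervalIntegrable_beta (hp k) hq ht)
  have hBval (k : ℕ) : ∫ u in Set.Ioc 0 t, B k u
      = (t ^ α) ^ k * (Gamma (α * ((k : ℝ) + 1)) * Gamma (1 - α) / Gamma (α * k + 1)) := by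
    rw [← intervalIntegral.integral_of_le ht.le, hB]
    simp only
    rw [integral_beta (hp k) hq ht, ← rpow_natCast, ← rpow_mul ht.le]
    ring_nf
  have hnorm (k : ℕ) : ∫ u in Set.Ioc 0 t, ‖a k * B k u‖
      = |c| * Gamma (1 - α) * ((|c| * t ^ α) ^ k / Gamma (α * k + 1)) := by
    have h1 : ∫ u in Set.Ioc 0 t, ‖a k * B k u‖ = ∫ u in Set.Ioc 0 t, |a k| * B k u := by
      refine setIntegral_congr_fun measurableSet_Ioc fun u hu => ?_
      have h0 : 0 ≤ B k u := mul_nonneg (rpow_nonneg (sub_nonneg.2 hu.2) _) (rpow_nonneg hu.1.le _)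
      simp only [norm_mul, Real.norm_eq_abs, abs_of_nonneg h0]
    have := (hΓ k).ne'
    rw [h1, integral_const_mul, hBval, ha]
    simp only
    rw [abs_div, abs_of_pos (hΓ k), abs_pow, abs_neg]
    field_simp
    ring
  have hmain := hasSum_integral_of_summable_integral_norm
    (μ := volume.restrict (Set.Ioc 0 t)) (F := fun k u => a k * B k u)
    (fun k => (hBint k).const_mul _)
    (by simp_rw [hnorm]; exact (summable_mittagLeffler hα one_pos _).mul_left _)
  rw [intervalIntegral.integral_of_le ht.le, mittagLeffler, ← tsum_mul_left]
  calc _ = ∫ u in Set.Ioc 0 t, ∑' k, a k * B k u := by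
        congr 1 with u
        rw [← tsum_mul_left]
        congr 1 with k
        simp only [ha, hB]
        rw [show 1 - α - 1 = -α by ring]
        ring
    _ = ∑' k, ∫ u in Set.Ioc 0 t, a k * B k u := hmain.tsum_eq.symm
    _ = _ := by
        congr 1 with k
        have := (hΓ k).ne'
        rw [integral_const_mul, hBval, ha]
        simp only
        field_simp
        ring

lemma mul_mittagLeffler_add {α : ℝ} (hα : 0 < α) (x : ℝ) :
    x * mittagLeffler α (α + 1) x = mittagLeffler α 1 x - 1 := by
  rw [mittagLeffler, mittagLeffler, (summable_mittagLeffler hα one_pos x).tsum_eq_zero_add,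
    ← tsum_mul_left]
  have h (k : ℕ) : x * (x ^ k / Gamma (α * k + (α + 1)))
      = x ^ (k + 1) / Gamma (α * ((k + 1 : ℕ) : ℝ) + 1) := by
    push_cast
    rw [show α * ((k : ℝ) + 1) + 1 = α * k + (α + 1) by ring]
    ring
  simp [h]

/-- Solution of the fractional free-fall equation with air resistance:
`v(t) = g t^α E_{α,α+1}(-(b/m) t^α) + v₀ E_α(-(b/m) t^α)` (with `v 0 = v₀`)
is differentiable on `(0,∞)` and satisfies the Caputo fractional equation
`m · (1/Γ(1-α)) ∫_0^t (t-u)^{-α} v'(u) du = m g − b v(t)` for all `t > 0`. -/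
theorem fractional_free_fall
    (α g b m v₀ : ℝ) (hα0 : 0 < α) (hα1 : α < 1)
    (hg : 0 < g) (hb : 0 < b) (hm : 0 < m)
    (v : ℝ → ℝ)
    (hv : ∀ t : ℝ, v t
      = g * t ^ α * mittagLeffler α (α + 1) (-(b / m) * t ^ α)
        + v₀ * mittagLeffler α 1 (-(b / m) * t ^ α))
    (hv0 : v 0 = v₀) :
    (∀ t : ℝ, 0 < t → DifferentiableAt ℝ v t) ∧
      ∀ t : ℝ, 0 < t →
        m * ((1 / Real.Gamma (1 - α)) *
            ∫ u in (0:ℝ)..t, (t - u) ^ (-α) * deriv v u)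
          = m * g - b * v t := by
  set c : ℝ := b / m with hc
  have hc0 : 0 < c := by positivity
  have hbc : b = c * m := by rw [hc]; field_simp
  have hform : v = fun t => g / c + (v₀ - g / c) * mittagLeffler α 1 (-c * t ^ α) := by
    funext t
    have h := mul_mittagLeffler_add hα0 (-c * t ^ α)
    have h' : t ^ α * mittagLeffler α (α + 1) (-c * t ^ α)
        = (1 - mittagLeffler α 1 (-c * t ^ α)) / c := by
      rw [eq_div_iff hc0.ne']
      linarith
    rw [hv, mul_assoc, h']
    ring
  have hderiv (t : ℝ) (ht : 0 < t) := ((hasDerivAt_relaxation (c := c) hα0 ht).const_mul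
    (v₀ - g / c)).const_add (g / c)
  rw [← hform] at hderiv
  refine ⟨fun t ht => (hderiv t ht).differentiableAt, fun t ht => ?_⟩
  have hint : ∫ u in (0 : ℝ)..t, (t - u) ^ (-α) * deriv v u
      = (v₀ - g / c) * (-c * Gamma (1 - α) * mittagLeffler α 1 (-c * t ^ α)) := by
    rw [← integral_relaxation hα0 hα1 ht, ← intervalIntegral.integral_const_mul,
      intervalIntegral.integral_of_le ht.le, intervalIntegral.integral_of_le ht.le]
    refine setIntegral_congr_fun measurableSet_Ioc fun u hu => ?_
    rw [(hderiv u hu.1).deriv]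
    ring
  have hΓ : Gamma (1 - α) ≠ 0 := (Gamma_pos_of_pos (by linarith)).ne'
  rw [hint, hform, hbc]
  field_simp
  ring
end
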